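/- Consider the m-state lamplighter chain on the two-dimensional discrete torus with n vertices (for which the maximal hitting time of the underlying walk is Θ(n·log n) and the expected cover time is Θ(n·log² n)). Then the entropy mixing time satisfies τ_ent = Ω(n·log(n·log m)); that is, there is a constant c′ > 0 such that τ_ent ≥ c′·n·log(n·log m). -/

import Mathlib

open Finset
open scoped Classical

namespace Paper

variable {X : Type} [Fintype X] [DecidableEq X]

/-- `P` is a stochastic matrix. -/
def IsStoch (P : Matrix X X ℝ) : Prop :=
  (∀ x y, 0 ≤ P x y) ∧ ∀ x, ∑ y, P x y = 1

/-- The uniform distribution is stationary for `P` (all columns sum to 1). -/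
def UnifStationary (P : Matrix X X ℝ) : Prop := ∀ y, ∑ x, P x y = 1

/-- Irreducibility of the chain. -/
def Irred (P : Matrix X X ℝ) : Prop := ∀ x y, ∃ n, 0 < (P ^ n) x y

/-- Probability of a trajectory `ω 0, ω 1, …, ω n` under initial distribution `μ`. -/
noncomputable def pathProb (P : Matrix X X ℝ) (μ : X → ℝ) {n : ℕ}
    (ω : Fin (n + 1) → X) : ℝ :=
  μ (ω 0) * ∏ i : Fin n, P (ω i.castSucc) (ω i.succ)

/-- Probability of an event determined by the trajectory up to time `n`. -/
noncomputable def prPath (P : Matrix X X ℝ) (μ : X → ℝ) (n : ℕ)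
    (E : (Fin (n + 1) → X) → Prop) : ℝ :=
  ∑ ω : Fin (n + 1) → X, if E ω then pathProb P μ ω else 0

/-- Expectation of a functional of the trajectory up to time `n`. -/
noncomputable def expPath (P : Matrix X X ℝ) (μ : X → ℝ) (n : ℕ)
    (f : (Fin (n + 1) → X) → ℝ) : ℝ :=
  ∑ ω : Fin (n + 1) → X, pathProb P μ ω * f ω

/-- Point mass at `x`. -/
def delta (x : X) : X → ℝ := fun z => if z = x then 1 else 0

/-- Expected hitting time `E_x[T_y]`, via `E[T] = ∑_{n ≥ 0} Pr(T > n)`. -/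
noncomputable def hitExp (P : Matrix X X ℝ) (x y : X) : ℝ :=
  (∑' n : ℕ, ENNReal.ofReal (prPath P (delta x) n (fun ω => ∀ i, ω i ≠ y))).toReal

/-- Maximal expected hitting time `H = max_{x,y} E_x[T_y]`. -/
noncomputable def maxHit (P : Matrix X X ℝ) : ℝ := ⨆ x, ⨆ y, hitExp P x y

/-- Relaxation time: `max 1/(1-|λ|)` over nontrivial eigenvalues `λ` of `P`. -/
noncomputable def Trel (P : Matrix X X ℝ) : ℝ :=
  sSup ((fun l : ℝ => 1 / (1 - |l|)) '' (spectrum ℝ P \ {1}))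

/-- The set of states not visited by the trajectory `ω` (up to its time horizon). -/
noncomputable def unvisited {n : ℕ} (ω : Fin (n + 1) → X) : Finset X :=
  Finset.univ.filter fun x => ∀ i, ω i ≠ x

/-- `Pr_x(T⁺_x ≥ s)`: the chain started at `x` does not return to `x`
at any time `i` with `1 ≤ i < s`. -/
noncomputable def prReturnGE (P : Matrix X X ℝ) (x : X) (s : ℝ) : ℝ :=
  prPath P (delta x) ⌈s⌉₊
    (fun ω => ∀ i : Fin (⌈s⌉₊ + 1), 1 ≤ (i : ℕ) → ((i : ℕ) : ℝ) < s → ω i ≠ x)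

/-- Separation distance at time `n` from state `x`. -/
noncomputable def sep (P : Matrix X X ℝ) (pi : X → ℝ) (x : X) (n : ℕ) : ℝ :=
  ⨆ y, (1 - (P ^ n) x y / pi y)

/-- Relative entropy `D(μ ‖ pi)` (with `0 log 0 = 0`). -/
noncomputable def relEnt (μ pi : X → ℝ) : ℝ := ∑ x, μ x * Real.log (μ x / pi x)

/-- Total variation distance `d_tv(μ, pi) = ∑_{y : μ y < pi y} (pi y - μ y)`. -/
noncomputable def dtv (μ pi : X → ℝ) : ℝ :=
  ∑ y ∈ Finset.univ.filter (fun y => μ y < pi y), (pi y - μ y)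

/-- Entropy decay (mixing) time. -/
noncomputable def tauEnt (P : Matrix X X ℝ) (pi : X → ℝ) (ε : ℝ) : ℕ :=
  sInf {n' | ∀ n ≥ n', ∀ x, relEnt ((P ^ n) x) pi ≤ ε}

/-- Separation mixing time. -/
noncomputable def tauSep (P : Matrix X X ℝ) (pi : X → ℝ) (ε : ℝ) : ℕ :=
  sInf {n' | ∀ n ≥ n', ∀ x, sep P pi x n ≤ ε}

/-- Total variation mixing time. -/
noncomputable def tauTV (P : Matrix X X ℝ) (pi : X → ℝ) (ε : ℝ) : ℕ :=
  sInf {n' | ∀ n ≥ n', ∀ x, dtv ((P ^ n) x) pi ≤ ε}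

/-- `L²(pi)` distance of `Pᵗ(x,·)` from `pi`. -/
noncomputable def chiDist (P : Matrix X X ℝ) (pi : X → ℝ) (t : ℕ) (x : X) : ℝ :=
  Real.sqrt (∑ y, ((P ^ t) x y / pi y - 1) ^ 2 * pi y)

/-- `L²` mixing time. -/
noncomputable def tau2 (P : Matrix X X ℝ) (pi : X → ℝ) : ℕ :=
  sInf {t | ∀ x, chiDist P pi t x ≤ 1 / 4}

/-- Uniform distribution on a finite type. -/
noncomputable def unif (Y : Type) [Fintype Y] : Y → ℝ := fun _ => (Fintype.card Y : ℝ)⁻¹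

/-- The `m`-state lamplighter chain over a base chain `Pb`:
the lamp at the current position is randomized, the lamplighter moves one step
of the base chain, and the lamp at the new position is randomized. -/
noncomputable def lampChain {V : Type} [Fintype V] [DecidableEq V]
    (Pb : Matrix V V ℝ) (m : ℕ) :
    Matrix ((V → Fin m) × V) ((V → Fin m) × V) ℝ :=
  fun p q =>
    if ∀ z, z ≠ p.2 → z ≠ q.2 → q.1 z = p.1 z then
      Pb p.2 q.2 * ((m : ℝ)⁻¹) ^ (({p.2, q.2} : Finset V).card)
    else 0

/-- Simple random walk on a `d`-regular graph. -/
noncomputable def srw {V : Type} [Fintype V] [DecidableEq V]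
    (G : SimpleGraph V) (d : ℕ) : Matrix V V ℝ :=
  fun x y => if G.Adj x y then (d : ℝ)⁻¹ else 0

/-- Lazy simple random walk on the two-dimensional discrete torus `ZMod k × ZMod k`. -/
noncomputable def torusWalk (k : ℕ) [NeZero k] :
    Matrix (ZMod k × ZMod k) (ZMod k × ZMod k) ℝ :=
  fun x y => (if y = x then 1 / 2 else 0) +
    (if y = (x.1 + 1, x.2) then 1 / 8 else 0) +
    (if y = (x.1 - 1, x.2) then 1 / 8 else 0) +
    (if y = (x.1, x.2 + 1) then 1 / 8 else 0) +
    (if y = (x.1, x.2 - 1) then 1 / 8 else 0)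

/-! ### Convergence to equilibrium -/

lemma stoch_mul {P Q : Matrix X X ℝ} (hP : IsStoch P) (hQ : IsStoch Q) : IsStoch (P * Q) := by
  refine ⟨fun x y => ?_, fun x => ?_⟩
  · rw [Matrix.mul_apply]
    exact Finset.sum_nonneg fun z _ => mul_nonneg (hP.1 _ _) (hQ.1 _ _)
  · simp only [Matrix.mul_apply]
    rw [Finset.sum_comm]
    simp only [← Finset.mul_sum, hQ.2, mul_one, hP.2]

lemma stoch_pow {P : Matrix X X ℝ} (hP : IsStoch P) (n : ℕ) : IsStoch (P ^ n) := by
  induction n with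
  | zero =>
    refine ⟨fun x y => ?_, fun x => ?_⟩
    · rw [pow_zero, Matrix.one_apply]; split_ifs <;> norm_num
    · simp [Matrix.one_apply]
  | succ n ih => rw [pow_succ]; exact stoch_mul ih hP

lemma unifStat_pow {P : Matrix X X ℝ} (hP : UnifStationary P) (n : ℕ) :
    UnifStationary (P ^ n) := by
  induction n with
  | zero => intro y; simp [Matrix.one_apply]
  | succ n ih =>
    intro y
    rw [pow_succ]
    simp only [Matrix.mul_apply]
    rw [Finset.sum_comm]
    have h : ∀ z, ∑ x, (P ^ n) x z * P z y = P z y := fun z => by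
      rw [← Finset.sum_mul, ih z, one_mul]
    simp only [h]
    exact hP y

/-- l1 contraction -/
lemma l1_contract {M : Matrix X X ℝ} (hM : IsStoch M) {δ : ℝ}
    (hδ : ∀ x y, δ ≤ M x y) (w : X → ℝ) (hw : ∑ x, w x = 0) :
    ∑ y, |∑ x, w x * M x y| ≤ (1 - Fintype.card X * δ) * ∑ x, |w x| := by
  have h1 : ∀ y, |∑ x, w x * M x y| ≤ ∑ x, |w x| * (M x y - δ) := by
    intro y
    have : ∑ x, w x * M x y = ∑ x, w x * (M x y - δ) := by
      simp only [mul_sub, Finset.sum_sub_distrib, ← Finset.sum_mul, hw]; ring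
    rw [this]
    refine (Finset.abs_sum_le_sum_abs _ _).trans (le_of_eq ?_)
    refine Finset.sum_congr rfl fun x _ => ?_
    rw [abs_mul, abs_of_nonneg (sub_nonneg.2 (hδ x y))]
  calc ∑ y, |∑ x, w x * M x y| ≤ ∑ y, ∑ x, |w x| * (M x y - δ) :=
        Finset.sum_le_sum fun y _ => h1 y
    _ = ∑ x, |w x| * (1 - Fintype.card X * δ) := by
        rw [Finset.sum_comm]
        refine Finset.sum_congr rfl fun x _ => ?_
        rw [← Finset.mul_sum, Finset.sum_sub_distrib, hM.2]
        simp
    _ = _ := by rw [← Finset.sum_mul, mul_comm]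

lemma card_pos_of (x : X) : (0 : ℝ) < Fintype.card X := by
  have : 0 < Fintype.card X := Fintype.card_pos_iff.2 ⟨x⟩
  exact_mod_cast this

lemma dev_sum {P : Matrix X X ℝ} (hP : IsStoch P) (x : X) (n : ℕ) :
    ∑ y, ((P ^ n) x y - unif X y) = 0 := by
  rw [Finset.sum_sub_distrib, (stoch_pow hP n).2]
  have := card_pos_of x
  simp [unif, this.ne']

lemma dev_step {P : Matrix X X ℝ} (hU : UnifStationary P) (x : X) (n r : ℕ)
    (y : X) :
    (P ^ (n + r)) x y - unif X y = ∑ z, ((P ^ n) x z - unif X z) * (P ^ r) z y := by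
  simp only [sub_mul, Finset.sum_sub_distrib]
  rw [pow_add, Matrix.mul_apply]
  congr 1
  simp only [unif]
  rw [← Finset.mul_sum, unifStat_pow hU r y, mul_one]

lemma relEnt_le_of_l1 (μ : X → ℝ) (h0 : ∀ x, 0 ≤ μ x) (h1 : ∀ x, μ x ≤ 1)
    (hs : ∑ x, μ x = 1) (x0 : X) :
    relEnt μ (unif X) ≤ Fintype.card X * ∑ x, |μ x - unif X x| := by
  have hc := card_pos_of x0
  unfold relEnt
  rw [Finset.mul_sum]
  refine Finset.sum_le_sum fun x _ => ?_
  rcases (h0 x).eq_or_lt with h | h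
  · rw [← h]; simp only [zero_mul]; positivity
  · have hr : 0 < μ x / unif X x := by unfold unif; positivity
    have hl := Real.log_le_sub_one_of_pos hr
    calc μ x * Real.log (μ x / unif X x) ≤ μ x * (μ x / unif X x - 1) := by gcongr
      _ = μ x * (Fintype.card X * (μ x - unif X x)) := by
        unfold unif; field_simp
      _ ≤ μ x * (Fintype.card X * |μ x - unif X x|) := by gcongr; exact le_abs_self _
      _ ≤ 1 * (Fintype.card X * |μ x - unif X x|) := by gcongr; exact h1 x
      _ = _ := one_mul _

lemma entry_le_one {P : Matrix X X ℝ} (hP : IsStoch P) (x y : X) : P x y ≤ 1 := by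
  rw [← hP.2 x]
  exact Finset.single_le_sum (f := fun y => P x y) (fun z _ => hP.1 x z) (Finset.mem_univ y)

lemma pow_pos_of_chain {P : Matrix X X ℝ} (hP : IsStoch P) {x y : X}
    (h : Relation.ReflTransGen (fun a b => 0 < P a b) x y) : ∃ n, 0 < (P ^ n) x y := by
  induction h with
  | refl => exact ⟨0, by simp⟩
  | @tail b c _ hbc ih =>
    obtain ⟨n, hn⟩ := ih
    refine ⟨n + 1, ?_⟩
    rw [pow_succ, Matrix.mul_apply]
    exact (mul_pos hn hbc).trans_le (Finset.single_le_sum (f := fun z => (P ^ n) x z * P z c)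
      (fun z _ => mul_nonneg ((stoch_pow hP n).1 _ _) (hP.1 _ _)) (Finset.mem_univ b))

lemma pow_pos_mono {P : Matrix X X ℝ} (hP : IsStoch P) (hd : ∀ x, 0 < P x x) {x y : X} {n r : ℕ}
    (h : 0 < (P ^ n) x y) (hnr : n ≤ r) : 0 < (P ^ r) x y := by
  induction r, hnr using Nat.le_induction with
  | base => exact h
  | succ r _ ih =>
    rw [pow_succ, Matrix.mul_apply]
    exact (mul_pos ih (hd y)).trans_le (Finset.single_le_sum (f := fun z => (P ^ r) x z * P z y)
      (fun z _ => mul_nonneg ((stoch_pow hP r).1 _ _) (hP.1 _ _)) (Finset.mem_univ y))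

lemma ent_eventually {P : Matrix X X ℝ} (hP : IsStoch P) (hU : UnifStationary P)
    (hd : ∀ x, 0 < P x x)
    (hirr : ∀ x y, Relation.ReflTransGen (fun a b => 0 < P a b) x y) {ε : ℝ} (hε : 0 < ε) :
    ∃ n', ∀ n ≥ n', ∀ x, relEnt ((P ^ n) x) (unif X) ≤ ε := by
  rcases isEmpty_or_nonempty X with hX | ⟨⟨x0⟩⟩
  · exact ⟨0, fun n _ x => (hX.false x).elim⟩
  have hc := card_pos_of x0
  choose f hf using fun x y => pow_pos_of_chain hP (hirr x y)
  obtain ⟨N, hN⟩ : ∃ N, ∀ x y, 0 < (P ^ N) x y := by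
    refine ⟨∑ x, ∑ y, f x y, fun x y => pow_pos_mono hP hd (hf x y) ?_⟩
    exact (Finset.single_le_sum (f := fun y => f x y) (fun _ _ => Nat.zero_le _)
      (Finset.mem_univ y)).trans (Finset.single_le_sum (f := fun x => ∑ y, f x y)
      (fun _ _ => Nat.zero_le _) (Finset.mem_univ x))
  obtain ⟨δ, hδ0, hδ⟩ : ∃ δ : ℝ, 0 < δ ∧ ∀ x y, δ ≤ (P ^ N) x y := by
    haveI : Nonempty (X × X) := ⟨(x0, x0)⟩
    obtain ⟨p, hp⟩ := Finite.exists_min (fun p : X × X => (P ^ N) p.1 p.2)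
    exact ⟨_, hN p.1 p.2, fun x y => hp (x, y)⟩
  set ρ : ℝ := 1 - Fintype.card X * δ with hρ
  have hρ1 : ρ < 1 := by have := mul_pos hc hδ0; linarith
  have hρ0 : 0 ≤ ρ := by
    have : ∑ y : X, δ ≤ ∑ y, (P ^ N) x0 y := Finset.sum_le_sum fun y _ => hδ x0 y
    rw [(stoch_pow hP N).2] at this
    simp at this; linarith
  let a : X → ℕ → ℝ := fun x n => ∑ y, |(P ^ n) x y - unif X y|
  have hmono : ∀ x n r, a x (n + r) ≤ a x n := by
    intro x n r
    have := l1_contract (stoch_pow hP r) (δ := 0) (fun x y => (stoch_pow hP r).1 x y)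
      _ (dev_sum hP x n)
    simp only [← dev_step hU] at this
    simpa using this
  have hcon : ∀ x n, a x (n + N) ≤ ρ * a x n := by
    intro x n
    have := l1_contract (stoch_pow hP N) hδ _ (dev_sum hP x n)
    simp only [← dev_step hU] at this
    exact this
  have ha0 : ∀ x, a x 0 ≤ 2 := by
    intro x
    calc a x 0 ≤ ∑ y, ((P ^ 0) x y + unif X y) := by
          refine Finset.sum_le_sum fun y _ => ?_
          have h1 := (stoch_pow hP 0).1 x y
          have h2 : 0 ≤ unif X y := by unfold unif; positivity
          rw [abs_le]; constructor <;> linarith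
      _ = 2 := by
          rw [Finset.sum_add_distrib, (stoch_pow hP 0).2]
          simp [unif]; rw [mul_inv_cancel₀ hc.ne']; norm_num
  have hq : ∀ x q, a x (N * q) ≤ ρ ^ q * 2 := by
    intro x q
    induction q with
    | zero => simpa using ha0 x
    | succ q ih =>
      rw [Nat.mul_succ, pow_succ]
      refine (hcon x _).trans ?_
      nlinarith
  obtain ⟨q, hqq⟩ := exists_pow_lt_of_lt_one (show 0 < ε / (Fintype.card X * 2) by positivity) hρ1
  refine ⟨N * q, fun n hn x => ?_⟩
  obtain ⟨r, rfl⟩ := Nat.exists_eq_add_of_le hn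
  have hst := stoch_pow hP (N * q + r)
  refine (relEnt_le_of_l1 _ (hst.1 x) (entry_le_one hst x) (hst.2 x) x0).trans ?_
  have h3 : a x (N * q + r) ≤ ρ ^ q * 2 := (hmono x _ _).trans (hq x q)
  calc _ ≤ (Fintype.card X : ℝ) * (ρ ^ q * 2) := by gcongr
    _ ≤ Fintype.card X * (ε / (Fintype.card X * 2) * 2) := by gcongr
    _ = ε := by field_simp

/-! ### Variational lower bound -/

lemma relEnt_ge (μ pi f : X → ℝ) (h0 : ∀ x, 0 ≤ μ x) (hs : ∑ x, μ x = 1)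
    (hpi : ∀ x, 0 < pi x) (hf : ∑ x, pi x * Real.exp (f x) ≤ 1) :
    ∑ x, μ x * f x ≤ relEnt μ pi := by
  have key : ∀ x, μ x * f x + μ x - pi x * Real.exp (f x) ≤ μ x * Real.log (μ x / pi x) := by
    intro x
    have hp := hpi x
    rcases (h0 x).eq_or_lt with h | h
    · rw [← h]; have := mul_pos hp (Real.exp_pos (f x)); simp; linarith
    · have hr : 0 < pi x * Real.exp (f x) / μ x := by positivity
      have hl := Real.log_le_sub_one_of_pos hr
      have : Real.log (pi x * Real.exp (f x) / μ x) = f x - Real.log (μ x / pi x) := by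
        rw [Real.log_div (by positivity) h.ne', Real.log_mul hp.ne' (Real.exp_pos _).ne',
          Real.log_exp, Real.log_div h.ne' hp.ne']; ring
      rw [this] at hl
      have h2 := mul_le_mul_of_nonneg_left hl h.le
      have h3 : μ x * (pi x * Real.exp (f x) / μ x - 1) = pi x * Real.exp (f x) - μ x := by
        field_simp
      rw [h3] at h2
      linarith
  have := Finset.sum_le_sum (s := Finset.univ) fun x _ => key x
  rw [Finset.sum_sub_distrib, Finset.sum_add_distrib, hs] at this
  unfold relEnt
  linarith

/-! ### Survival probabilities of the base walk -/

/-- The base chain killed at `z`. -/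
noncomputable def killed (P : Matrix X X ℝ) (z : X) : Matrix X X ℝ :=
  fun x y => if x = z then 0 else if y = z then 0 else P x y

/-- Indicator of the complement of `z`. -/
noncomputable def offInd (z : X) : X → ℝ := fun x => if x = z then 0 else 1

/-- Probability that the walk started at `x` has not visited `z` up to time `t`. -/
noncomputable def surv (P : Matrix X X ℝ) (z : X) (t : ℕ) : X → ℝ :=
  (killed P z ^ t).mulVec (offInd z)

lemma surv_zero (P : Matrix X X ℝ) (z : X) : surv P z 0 = offInd z := by
  simp [surv]

lemma surv_succ (P : Matrix X X ℝ) (z : X) (t : ℕ) :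
    surv P z (t + 1) = (killed P z).mulVec (surv P z t) := by
  rw [surv, surv, pow_succ', Matrix.mulVec_mulVec]

lemma surv_self (P : Matrix X X ℝ) (z : X) (t : ℕ) : surv P z t z = 0 := by
  cases t with
  | zero => simp [surv_zero, offInd]
  | succ t => rw [surv_succ]; simp [Matrix.mulVec, dotProduct, killed]

lemma surv_succ_of_ne (P : Matrix X X ℝ) {z x : X} (h : x ≠ z) (t : ℕ) :
    surv P z (t + 1) x = ∑ y, P x y * surv P z t y := by
  rw [surv_succ]
  simp only [Matrix.mulVec, dotProduct]
  refine Finset.sum_congr rfl fun y _ => ?_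
  by_cases hy : y = z
  · subst hy; rw [surv_self]; simp
  · simp [killed, h, hy]

lemma surv_le {P : Matrix X X ℝ} (hP : IsStoch P) (z : X) (t : ℕ) (x : X) :
    surv P z t x ≤ 1 := by
  induction t generalizing x with
  | zero => rw [surv_zero, offInd]; split_ifs <;> norm_num
  | succ t ih =>
    by_cases h : x = z
    · subst h; rw [surv_self]; norm_num
    · rw [surv_succ_of_ne P h, ← hP.2 x]
      refine Finset.sum_le_sum fun y _ => ?_
      exact mul_le_of_le_one_right (hP.1 _ _) (ih y)

lemma killed_symm {P : Matrix X X ℝ} (hs : ∀ x y, P x y = P y x) (z : X) :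
    (killed P z).transpose = killed P z := by
  ext x y
  simp only [Matrix.transpose_apply, killed]
  split_ifs <;> first | rfl | exact hs _ _

lemma offInd_dot (z : X) : offInd z ⬝ᵥ offInd z = Fintype.card X - 1 := by
  have : ∀ x, offInd z x * offInd z x = 1 - if x = z then 1 else 0 := by
    intro x; unfold offInd; split_ifs <;> norm_num
  simp only [dotProduct, this, Finset.sum_sub_distrib]
  simp

lemma surv_double {P : Matrix X X ℝ} (hs : ∀ x y, P x y = P y x) (z : X) (t : ℕ) :
    (offInd z ⬝ᵥ surv P z t) ^ 2 ≤ (Fintype.card X - 1) * (offInd z ⬝ᵥ surv P z (2 * t)) := by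
  have h1 : offInd z ⬝ᵥ surv P z (2 * t) = surv P z t ⬝ᵥ surv P z t := by
    have ht : (killed P z ^ t).transpose = killed P z ^ t := by
      rw [Matrix.transpose_pow, killed_symm hs]
    rw [two_mul, surv, pow_add, ← Matrix.mulVec_mulVec, Matrix.dotProduct_mulVec]
    conv_lhs => rw [← ht, Matrix.vecMul_transpose, ht]
    rfl
  rw [h1, ← offInd_dot z]
  have := Finset.sum_mul_sq_le_sq_mul_sq Finset.univ (offInd z) (surv P z t)
  simpa only [dotProduct, sq] using this

lemma surv_one_sum {P : Matrix X X ℝ} (hP : IsStoch P) (hs : ∀ x y, P x y = P y x)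
    (hd : ∀ x, 1 / 2 ≤ P x x) (z : X) :
    (Fintype.card X : ℝ) - 3 / 2 ≤ offInd z ⬝ᵥ surv P z 1 := by
  have h1 : ∀ x, offInd z x * surv P z 1 x =
      (1 - P x z) - if x = z then 1 - P z z else 0 := by
    intro x
    by_cases h : x = z
    · subst h; simp [offInd]
    · rw [surv_succ_of_ne P h]
      have : ∀ y, P x y * surv P z 0 y = P x y - if y = z then P x z else 0 := by
        intro y
        rw [surv_zero, offInd]; split_ifs with hy
        · rw [hy]; simp
        · simp
      simp only [this, Finset.sum_sub_distrib, hP.2]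
      simp [offInd, h]
  have h2 : ∑ x, P x z = 1 := by simp only [hs _ z]; exact hP.2 z
  simp only [dotProduct, h1, Finset.sum_sub_distrib, h2]
  simp
  have := hd z
  linarith

lemma surv_pow_two {P : Matrix X X ℝ} (hP : IsStoch P) (hs : ∀ x y, P x y = P y x)
    (hd : ∀ x, 1 / 2 ≤ P x x) (z : X) (hc : (4 : ℝ) ≤ Fintype.card X) (j : ℕ) :
    ((Fintype.card X : ℝ) - 1) *
      (1 - 1 / (2 * ((Fintype.card X : ℝ) - 1))) ^ (2 ^ j) ≤ offInd z ⬝ᵥ surv P z (2 ^ j) := by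
  set n : ℝ := (Fintype.card X : ℝ)
  have hn : 0 < n - 1 := by linarith
  have hr : 0 ≤ 1 - 1 / (2 * (n - 1)) := by
    rw [sub_nonneg, div_le_one (by linarith)]; linarith
  induction j with
  | zero =>
    have := surv_one_sum hP hs hd z
    refine le_trans (le_of_eq ?_) this
    rw [pow_zero, pow_one]; field_simp; ring
  | succ j ih =>
    have h := surv_double hs z (2 ^ j)
    rw [pow_succ 2 j, pow_mul, mul_comm (2 ^ j) 2]
    have h4 := pow_le_pow_left₀ (by positivity) ih 2
    have h5 := h4.trans h
    rw [mul_pow, sq (n - 1), mul_assoc] at h5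
    exact le_of_mul_le_mul_left h5 hn

lemma exists_start {P : Matrix X X ℝ} (hP : IsStoch P) (hs : ∀ x y, P x y = P y x)
    (hd : ∀ x, 1 / 2 ≤ P x x) (hc : (4 : ℝ) ≤ Fintype.card X) (j : ℕ) :
    ∃ x, (Fintype.card X : ℝ) / 2 * Real.exp (-(2 * 2 ^ j / Fintype.card X)) ≤
      ∑ z, surv P z (2 ^ j) x := by
  set n : ℝ := (Fintype.card X : ℝ)
  have hn : 0 < n - 1 := by linarith
  have hne : (Finset.univ : Finset X).Nonempty := by
    rw [Finset.univ_nonempty_iff, ← Fintype.card_pos_iff]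
    have : (0 : ℝ) < Fintype.card X := by change (0 : ℝ) < n; linarith
    exact_mod_cast this
  have hb : Real.exp (-(2 / n)) ≤ 1 - 1 / (2 * (n - 1)) := by
    have hr : 0 < 1 - 1 / (2 * (n - 1)) := by
      rw [sub_pos, div_lt_one (by linarith)]; linarith
    rw [← Real.le_log_iff_exp_le hr]
    refine le_trans ?_ (Real.one_sub_inv_le_log_of_pos hr)
    have : 1 - (1 - 1 / (2 * (n - 1)))⁻¹ = - (1 / (2 * n - 3)) := by
      have h3 : 2 * n - 3 ≠ 0 := by linarith
      have : 1 - 1 / (2 * (n - 1)) = (2 * n - 3) / (2 * (n - 1)) := by field_simp; ring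
      rw [this, inv_div]; field_simp; ring
    rw [this, neg_le_neg_iff, div_le_div_iff₀ (by linarith) (by linarith)]
    linarith
  have hE : Real.exp (-(2 * 2 ^ j / n)) = Real.exp (-(2 / n)) ^ (2 ^ j) := by
    rw [← Real.exp_nat_mul]; congr 1; push_cast; ring
  have hz : ∀ z, n / 2 * Real.exp (-(2 * 2 ^ j / n)) ≤ ∑ x, surv P z (2 ^ j) x := by
    intro z
    have h1 := surv_pow_two hP hs hd z hc j
    have h2 : offInd z ⬝ᵥ surv P z (2 ^ j) = ∑ x, surv P z (2 ^ j) x := by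
      refine Finset.sum_congr rfl fun x _ => ?_
      by_cases h : x = z
      · subst h; rw [surv_self]; simp
      · simp [offInd, h]
    rw [← h2]
    refine le_trans ?_ h1
    rw [hE]
    refine mul_le_mul (by change n / 2 ≤ n - 1; linarith) ?_ (by positivity) hn.le
    exact pow_le_pow_left₀ (Real.exp_pos _).le hb _
  obtain ⟨x, _, hx⟩ := Finset.exists_le_of_sum_le (s := Finset.univ) hne
    (f := fun _ : X => n / 2 * Real.exp (-(2 * 2 ^ j / n)))
    (g := fun x => ∑ z, surv P z (2 ^ j) x) (by
      rw [Finset.sum_comm]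
      exact Finset.sum_le_sum fun z _ => hz z)
  exact ⟨x, hx⟩

/-! ### The lamplighter chain -/

section lamp

variable {V : Type} [Fintype V] [DecidableEq V]

lemma lamp_avg (m : ℕ) (hm : 0 < m) (A : Finset V) (l : V → Fin m) (z : V) (g : Fin m → ℝ) :
    ∑ l' : V → Fin m, (if ∀ v, v ∉ A → l' v = l v then ((m : ℝ)⁻¹) ^ A.card else 0) * g (l' z) =
      if z ∈ A then (m : ℝ)⁻¹ * ∑ a, g a else g (l z) := by
  have hm' : (m : ℝ) ≠ 0 := by positivity
  let w : V → Fin m → ℝ := fun v a => if v ∈ A then (m : ℝ)⁻¹ else if a = l v then 1 else 0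
  have hw : ∀ l' : V → Fin m,
      (if ∀ v, v ∉ A → l' v = l v then ((m : ℝ)⁻¹) ^ A.card else 0) = ∏ v, w v (l' v) := by
    intro l'
    split_ifs with h
    · rw [← Finset.prod_const, ← Finset.prod_filter_mul_prod_filter_not Finset.univ (· ∈ A)]
      have h1 : ∏ v with v ∉ A, w v (l' v) = 1 := by
        apply Finset.prod_eq_one
        intro v hv
        have hv' : v ∉ A := by simpa using hv
        simp [w, hv', h v hv']
      rw [h1, mul_one]
      have h2 : ∀ v ∈ A, w v (l' v) = (m : ℝ)⁻¹ := fun v hv => by simp [w, hv]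
      rw [← Finset.prod_congr rfl h2]
      refine Finset.prod_congr ?_ fun _ _ => rfl
      ext; simp
    · push Not at h
      obtain ⟨v, hv, hne⟩ := h
      symm
      apply Finset.prod_eq_zero (Finset.mem_univ v)
      simp [w, hv, hne]
  have hg : ∀ l' : V → Fin m, (∏ v, w v (l' v)) * g (l' z) =
      ∏ v, (w v (l' v) * if v = z then g (l' v) else 1) := by
    intro l'
    rw [Finset.prod_mul_distrib]
    congr 1
    simp
  simp only [hw, hg]
  rw [← Fintype.prod_sum (fun v a => w v a * if v = z then g a else 1)]
  rw [Finset.prod_eq_single z]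
  · by_cases hz : z ∈ A
    · simp [w, hz, Finset.mul_sum]
    · simp [w, hz]
  · intro v _ hvz
    by_cases hv : v ∈ A
    · simp [w, hv, hvz, hm']
    · simp [w, hv, hvz]
  · simp

lemma lamp_entry (Pb : Matrix V V ℝ) (m : ℕ) (l l' : V → Fin m) (x y : V) :
    lampChain Pb m (l, x) (l', y) = Pb x y *
      (if ∀ v, v ∉ ({x, y} : Finset V) → l' v = l v then
        ((m : ℝ)⁻¹) ^ (({x, y} : Finset V).card) else 0) := by
  have : (∀ v, v ∉ ({x, y} : Finset V) → l' v = l v) ↔ ∀ z, z ≠ x → z ≠ y → l' z = l z := by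
    simp
  simp only [lampChain]
  by_cases h : ∀ z, z ≠ x → z ≠ y → l' z = l z
  · rw [if_pos h, if_pos (this.2 h)]
  · rw [if_neg h, if_neg (fun h' => h (this.1 h')), mul_zero]

lemma lamp_apply (Pb : Matrix V V ℝ) (m : ℕ) (hm : 0 < m) (l : V → Fin m) (x z : V)
    (G : Fin m → V → ℝ) :
    ∑ q : (V → Fin m) × V, lampChain Pb m (l, x) q * G (q.1 z) q.2 =
      ∑ y, Pb x y * (if z = x ∨ z = y then (m : ℝ)⁻¹ * ∑ a, G a y else G (l z) y) := by
  rw [Fintype.sum_prod_type_right]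
  refine Finset.sum_congr rfl fun y _ => ?_
  simp only [lamp_entry, mul_assoc, ← Finset.mul_sum]
  rw [lamp_avg m hm {x, y} l z (fun a => G a y)]
  simp

lemma lamp_stoch {Pb : Matrix V V ℝ} (hP : IsStoch Pb) (m : ℕ) (hm : 0 < m) :
    IsStoch (lampChain Pb m) := by
  refine ⟨fun p q => ?_, fun p => ?_⟩
  · unfold lampChain
    split_ifs
    · exact mul_nonneg (hP.1 _ _) (by positivity)
    · exact le_rfl
  · obtain ⟨l, x⟩ := p
    have := lamp_apply Pb m hm l x x (fun _ _ => 1)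
    have hm' : (m : ℝ) ≠ 0 := by positivity
    simpa [hm', hP.2] using this

lemma lamp_symm {Pb : Matrix V V ℝ} (hs : ∀ x y, Pb x y = Pb y x) (m : ℕ)
    (p q : (V → Fin m) × V) : lampChain Pb m p q = lampChain Pb m q p := by
  obtain ⟨l, x⟩ := p
  obtain ⟨l', y⟩ := q
  rw [lamp_entry, lamp_entry, hs x y, Finset.pair_comm x y]
  congr 1
  congr 1
  exact propext ⟨fun h v hv => (h v hv).symm, fun h v hv => (h v hv).symm⟩

lemma lamp_unif {Pb : Matrix V V ℝ} (hP : IsStoch Pb) (hs : ∀ x y, Pb x y = Pb y x) (m : ℕ)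
    (hm : 0 < m) : UnifStationary (lampChain Pb m) := by
  intro q
  simp only [lamp_symm hs m _ q]
  exact (lamp_stoch hP m hm).2 q

lemma lamp_pos {Pb : Matrix V V ℝ} {m : ℕ} (hm : 0 < m) {l l' : V → Fin m} {x y : V}
    (h : 0 < Pb x y) (hl : ∀ v, v ≠ x → v ≠ y → l' v = l v) :
    0 < lampChain Pb m (l, x) (l', y) := by
  unfold lampChain
  rw [if_pos hl]
  have : (0 : ℝ) < m := by exact_mod_cast hm
  positivity

lemma lamp_irred {Pb : Matrix V V ℝ} {m : ℕ} (hm : 0 < m) (hd : ∀ x, 0 < Pb x x)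
    (hirr : ∀ x y, Relation.ReflTransGen (fun a b => 0 < Pb a b) x y)
    (p q : (V → Fin m) × V) :
    Relation.ReflTransGen (fun a b => 0 < lampChain Pb m a b) p q := by
  have hmove : ∀ (l : V → Fin m) x y,
      Relation.ReflTransGen (fun a b => 0 < lampChain Pb m a b) (l, x) (l, y) := by
    intro l x y
    have h := hirr x y
    induction h with
    | refl => exact Relation.ReflTransGen.refl
    | tail _ hbc ih => exact ih.tail (lamp_pos hm hbc (fun _ _ _ => rfl))
  obtain ⟨l, x⟩ := p
  obtain ⟨l', y⟩ := q
  have hset : ∀ A : Finset V, Relation.ReflTransGen (fun a b => 0 < lampChain Pb m a b) (l, x)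
      ((fun v => if v ∈ A then l' v else l v), x) := by
    intro A
    induction A using Finset.induction_on with
    | empty => simpa using Relation.ReflTransGen.refl
    | insert z A _ ih =>
      refine ih.trans ((hmove _ x z).trans (Relation.ReflTransGen.trans ?_ (hmove _ z x)))
      refine Relation.ReflTransGen.single (lamp_pos hm (hd z) ?_)
      intro v hv _
      simp [hv]
  have := hset Finset.univ
  simp only [Finset.mem_univ, if_true] at this
  exact this.trans (hmove l' x y)

/-- Law of one lamp at a positive time. -/
lemma lamp_law {Pb : Matrix V V ℝ} (hP : IsStoch Pb) (m : ℕ) (hm : 0 < m) (a0 : Fin m) (z : V)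
    (t : ℕ) (l : V → Fin m) (x : V) :
    ∑ q : (V → Fin m) × V, (lampChain Pb m ^ (t + 1)) (l, x) q * (if q.1 z = a0 then 1 else 0) =
      (m : ℝ)⁻¹ + ((if l z = a0 then 1 else 0) - (m : ℝ)⁻¹) * surv Pb z (t + 1) x := by
  have hm' : (m : ℝ) ≠ 0 := by positivity
  induction t generalizing l x with
  | zero =>
    rw [zero_add, pow_one, lamp_apply Pb m hm l x z (fun a _ => if a = a0 then 1 else 0)]
    by_cases h : x = z
    · subst h
      rw [surv_self]
      simp [← Finset.sum_mul, hP.2]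
    · rw [surv_succ_of_ne Pb h]
      have hh : ∀ y, Pb x y * (if z = x ∨ z = y then (m : ℝ)⁻¹ * ∑ a : Fin m, (if a = a0 then (1:ℝ) else 0)
          else if l z = a0 then 1 else 0) = Pb x y * (m : ℝ)⁻¹ +
          ((if l z = a0 then 1 else 0) - (m : ℝ)⁻¹) * (Pb x y * surv Pb z 0 y) := by
        intro y
        rw [surv_zero, offInd]
        by_cases hy : y = z
        · subst hy; simp
        · by_cases hl : l z = a0 <;> simp [Ne.symm h, Ne.symm hy, hy, hl] <;> ring
      simp only [hh, Finset.sum_add_distrib, ← Finset.sum_mul, ← Finset.mul_sum, hP.2, one_mul]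
  | succ t ih =>
    have e : ∑ q : (V → Fin m) × V, (lampChain Pb m ^ (t + 1 + 1)) (l, x) q *
        (if q.1 z = a0 then (1:ℝ) else 0) = ∑ r : (V → Fin m) × V, lampChain Pb m (l, x) r *
        ((m : ℝ)⁻¹ + ((if r.1 z = a0 then 1 else 0) - (m : ℝ)⁻¹) * surv Pb z (t + 1) r.2) := by
      have : ∀ r : (V → Fin m) × V, _ := fun r => ih r.1 r.2
      simp only [← this, Prod.mk.eta]
      simp only [pow_succ' _ (t + 1), Matrix.mul_apply, Finset.sum_mul, Finset.mul_sum]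
      rw [Finset.sum_comm]
      simp only [mul_assoc]
    rw [e, lamp_apply Pb m hm l x z (fun a y => (m : ℝ)⁻¹ +
      ((if a = a0 then 1 else 0) - (m : ℝ)⁻¹) * surv Pb z (t + 1) y)]
    have hav : ∀ y, (m : ℝ)⁻¹ * ∑ a : Fin m, ((m : ℝ)⁻¹ +
      ((if a = a0 then 1 else 0) - (m : ℝ)⁻¹) * surv Pb z (t + 1) y) = (m : ℝ)⁻¹ := by
      intro y
      rw [Finset.sum_add_distrib, ← Finset.sum_mul, Finset.sum_sub_distrib]
      simp [hm']
    simp only [hav]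
    by_cases h : x = z
    · subst h
      rw [surv_self]
      simp [← Finset.sum_mul, hP.2]
    · rw [surv_succ_of_ne Pb h]
      have hh : ∀ y, Pb x y * (if z = x ∨ z = y then (m : ℝ)⁻¹ else (m : ℝ)⁻¹ +
          ((if l z = a0 then 1 else 0) - (m : ℝ)⁻¹) * surv Pb z (t + 1) y) = Pb x y * (m : ℝ)⁻¹ +
          ((if l z = a0 then 1 else 0) - (m : ℝ)⁻¹) * (Pb x y * surv Pb z (t + 1) y) := by
        intro y
        by_cases hy : y = z
        · subst hy; simp [surv_self]
        · simp [Ne.symm h, Ne.symm hy]; ring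
      simp only [hh, Finset.sum_add_distrib, ← Finset.sum_mul, ← Finset.mul_sum, hP.2, one_mul]

/-- Exponential moment of the number of lamps in state `a0` under the uniform law. -/
lemma unif_expmoment (m : ℕ) (hm : 0 < m) [Nonempty V] (a0 : Fin m) (β : ℝ) :
    ∑ q : (V → Fin m) × V, unif ((V → Fin m) × V) q * Real.exp (∑ z, (β * (if q.1 z = a0 then 1 else 0)
      - (Real.exp β - 1) / m)) ≤ 1 := by
  have hm' : (0 : ℝ) < m := by exact_mod_cast hm
  have hV : (0 : ℝ) < Fintype.card V := by exact_mod_cast Fintype.card_pos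
  simp only [unif, ← Finset.mul_sum, Real.exp_sum]
  rw [Fintype.sum_prod_type_right]
  simp only
  have hps := Fintype.prod_sum (κ := fun _ : V => Fin m) (fun _ a =>
    Real.exp (β * (if a = a0 then 1 else 0) - (Real.exp β - 1) / m))
  rw [Finset.sum_congr rfl (fun _ _ => hps.symm)]
  have h1 : ∑ a : Fin m, Real.exp (β * (if a = a0 then 1 else 0) - (Real.exp β - 1) / m) ≤ m := by
    have e : ∀ a : Fin m, Real.exp (β * (if a = a0 then 1 else 0) - (Real.exp β - 1) / m) =
        (1 + if a = a0 then Real.exp β - 1 else 0) * Real.exp (-((Real.exp β - 1) / m)) := by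
      intro a
      rw [sub_eq_add_neg, Real.exp_add]
      split_ifs <;> simp
    simp only [e, ← Finset.sum_mul, Finset.sum_add_distrib]
    simp
    have h2 := Real.add_one_le_exp ((Real.exp β - 1) / m)
    rw [Real.exp_neg, ← div_eq_mul_inv, div_le_iff₀ (Real.exp_pos _)]
    calc (m : ℝ) + (Real.exp β - 1) = m * ((Real.exp β - 1) / m + 1) := by field_simp; ring
      _ ≤ _ := by gcongr
  have h0 : 0 ≤ ∑ a : Fin m, Real.exp (β * (if a = a0 then 1 else 0) - (Real.exp β - 1) / m) :=
    Finset.sum_nonneg fun _ _ => (Real.exp_pos _).le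
  have h3 := pow_le_pow_left₀ h0 h1 (Fintype.card V)
  simp only [Finset.prod_const, Finset.sum_const, Finset.card_univ, nsmul_eq_mul]
  rw [inv_mul_le_iff₀ (by simp only [Fintype.card_prod]; push_cast; simp; positivity)]
  simp only [Fintype.card_prod, Fintype.card_fun, Fintype.card_fin]
  push_cast
  rw [mul_one, mul_comm]
  gcongr

lemma lamp_ent_ge {Pb : Matrix V V ℝ} (hP : IsStoch Pb) (m : ℕ) (hm : 0 < m) [Nonempty V]
    (a0 : Fin m) (β : ℝ) (t : ℕ) (x : V) :
    β * (Fintype.card V * (m : ℝ)⁻¹ + (1 - (m : ℝ)⁻¹) * ∑ z, surv Pb z (t + 1) x) -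
      Fintype.card V * ((Real.exp β - 1) / m) ≤
    relEnt ((lampChain Pb m ^ (t + 1)) ((fun _ => a0), x)) (unif ((V → Fin m) × V)) := by
  have hst := stoch_pow (lamp_stoch hP m hm) (t + 1)
  refine le_trans (le_of_eq ?_) (relEnt_ge _ _ _ (hst.1 _) (hst.2 _) ?_
    (unif_expmoment m hm a0 β))
  · simp only [Finset.mul_sum, mul_sub]
    rw [Finset.sum_comm]
    have : ∀ z, ∑ q : (V → Fin m) × V, ((lampChain Pb m ^ (t + 1)) ((fun _ => a0), x) q *
        (β * (if q.1 z = a0 then 1 else 0)) -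
        (lampChain Pb m ^ (t + 1)) ((fun _ => a0), x) q * ((Real.exp β - 1) / m)) =
        β * ((m : ℝ)⁻¹ + (1 - (m : ℝ)⁻¹) * surv Pb z (t + 1) x) - (Real.exp β - 1) / m := by
      intro z
      have h := lamp_law hP m hm a0 z t (fun _ => a0) x
      simp only [if_true] at h
      rw [← h, Finset.sum_sub_distrib, ← Finset.sum_mul, hst.2, one_mul, Finset.mul_sum]
      congr 1
      refine Finset.sum_congr rfl fun q _ => by ring
    simp only [this]
    rw [Finset.sum_sub_distrib]
    simp only [← Finset.mul_sum, Finset.sum_add_distrib]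
    simp
  · intro q
    have : Nonempty ((V → Fin m) × V) := ⟨q⟩
    have : 0 < Fintype.card ((V → Fin m) × V) := Fintype.card_pos
    unfold unif
    positivity

end lamp

/-! ### The torus walk -/

lemma torus_stoch (k : ℕ) [NeZero k] : IsStoch (torusWalk k) := by
  refine ⟨fun x y => ?_, fun x => ?_⟩
  · unfold torusWalk; positivity
  · simp only [torusWalk, Finset.sum_add_distrib, Finset.sum_ite_eq', Finset.mem_univ, if_true]
    norm_num

lemma torus_symm (k : ℕ) [NeZero k] (x y : ZMod k × ZMod k) :
    torusWalk k x y = torusWalk k y x := by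
  obtain ⟨a, b⟩ := x
  obtain ⟨c, d⟩ := y
  have h0 : ((c, d) = (a, b)) ↔ ((a, b) = (c, d)) := eq_comm
  have h1 : ((c, d) = (a + 1, b)) ↔ ((a, b) = (c - 1, d)) := by
    simp only [Prod.mk.injEq]; constructor <;> rintro ⟨rfl, rfl⟩ <;> simp
  have h2 : ((c, d) = (a - 1, b)) ↔ ((a, b) = (c + 1, d)) := by
    simp only [Prod.mk.injEq]; constructor <;> rintro ⟨rfl, rfl⟩ <;> simp
  have h3 : ((c, d) = (a, b + 1)) ↔ ((a, b) = (c, d - 1)) := by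
    simp only [Prod.mk.injEq]; constructor <;> rintro ⟨rfl, rfl⟩ <;> simp
  have h4 : ((c, d) = (a, b - 1)) ↔ ((a, b) = (c, d + 1)) := by
    simp only [Prod.mk.injEq]; constructor <;> rintro ⟨rfl, rfl⟩ <;> simp
  simp only [torusWalk, h0, h1, h2, h3, h4]
  ring

lemma ite_nonneg' (p : Prop) [Decidable p] : (0 : ℝ) ≤ if p then 1 / 8 else 0 := by
  split_ifs <;> norm_num

lemma torus_diag (k : ℕ) [NeZero k] (x : ZMod k × ZMod k) : 1 / 2 ≤ torusWalk k x x := by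
  unfold torusWalk
  rw [if_pos rfl]
  have h1 := ite_nonneg' (x = (x.1 + 1, x.2))
  have h2 := ite_nonneg' (x = (x.1 - 1, x.2))
  have h3 := ite_nonneg' (x = (x.1, x.2 + 1))
  have h4 := ite_nonneg' (x = (x.1, x.2 - 1))
  linarith

lemma torus_irred (k : ℕ) [NeZero k] (x y : ZMod k × ZMod k) :
    Relation.ReflTransGen (fun a b => 0 < torusWalk k a b) x y := by
  have s1 : ∀ a b : ZMod k, 0 < torusWalk k (a, b) (a + 1, b) := by
    intro a b
    simp only [torusWalk, if_true]
    positivity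
  have s2 : ∀ a b : ZMod k, 0 < torusWalk k (a, b) (a, b + 1) := by
    intro a b
    simp only [torusWalk, if_true]
    positivity
  have t1 : ∀ (j : ℕ) (a b : ZMod k),
      Relation.ReflTransGen (fun a b => 0 < torusWalk k a b) (a, b) (a + j, b) := by
    intro j a b
    induction j with
    | zero => simpa using Relation.ReflTransGen.refl
    | succ j ih =>
      refine ih.tail ?_
      have := s1 (a + j) b
      push_cast
      rwa [← add_assoc]
  have t2 : ∀ (j : ℕ) (a b : ZMod k),
      Relation.ReflTransGen (fun a b => 0 < torusWalk k a b) (a, b) (a, b + j) := by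
    intro j a b
    induction j with
    | zero => simpa using Relation.ReflTransGen.refl
    | succ j ih =>
      refine ih.tail ?_
      have := s2 a (b + j)
      push_cast
      rwa [← add_assoc]
  obtain ⟨a, b⟩ := x
  obtain ⟨c, d⟩ := y
  have h1 := t1 (c - a).val a b
  have h2 := t2 (d - b).val c b
  rw [ZMod.natCast_zmod_val] at h1 h2
  rw [add_sub_cancel] at h1 h2
  exact h1.trans h2

lemma relEnt_zero (P : Matrix X X ℝ) (x : X) (hc : 2 ≤ Fintype.card X) :
    (Real.exp 1)⁻¹ < relEnt ((P ^ 0) x) (unif X) := by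
  have h : relEnt ((P ^ 0) x) (unif X) = Real.log (Fintype.card X) := by
    unfold relEnt
    rw [Finset.sum_eq_single x]
    · simp [unif]
    · intro y _ hy; simp [Matrix.one_apply, hy.symm]
    · simp
  rw [h]
  have h1 : Real.log 2 ≤ Real.log (Fintype.card X) :=
    Real.log_le_log (by norm_num) (by exact_mod_cast hc)
  have h2 := Real.log_two_gt_d9
  have h3 := Real.exp_one_gt_d9
  have h4 : (Real.exp 1)⁻¹ ≤ 2⁻¹ := by gcongr; linarith
  norm_num at h4 ⊢
  linarith

/-- Final arithmetic. -/
lemma final_arith (n m S : ℝ) (T : ℝ) (hn : 4 ≤ n) (hm : 2 ≤ m)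
    (hS : n / 2 * Real.exp (-(2 * T / n)) ≤ S) (hSn : S ≤ n)
    (hT : T ≤ 2 * (1 / 10 ^ 8 * n * Real.log (n * Real.log m)))
    (hs : 1 ≤ 1 / 10 ^ 8 * n * Real.log (n * Real.log m))
    (hD : ∀ β : ℝ, β * (n * m⁻¹ + (1 - m⁻¹) * S) - n * ((Real.exp β - 1) / m) ≤ 1 / 2) :
    False := by
  have hL : (0.69 : ℝ) < Real.log m := by
    have h1 : Real.log 2 ≤ Real.log m := Real.log_le_log (by norm_num) hm
    have h2 := Real.log_two_gt_d9
    norm_num at h2 ⊢; linarith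
  set L := Real.log m with hLdef
  have hN : 1 ≤ n * L := by nlinarith
  set N := n * L with hNdef
  have hn0 : 0 < n := by linarith
  have hlog : 0 ≤ Real.log N := Real.log_nonneg hN
  -- v = N^{1/48}
  set v := Real.exp (Real.log N / 48) with hv
  have hv1 : 1 ≤ v := Real.one_le_exp (by positivity)
  have hv48 : v ^ 48 = N := by
    rw [hv, ← Real.exp_nat_mul, ← Real.exp_log (show 0 < N by linarith)]
    congr 1; push_cast; rw [Real.log_exp]; ring
  have hS' : n / 2 ≤ S * v := by
    have h1 : Real.exp (-(Real.log N / 48)) ≤ Real.exp (-(2 * T / n)) := by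
      apply Real.exp_le_exp.2
      rw [neg_le_neg_iff, div_le_iff₀ hn0]
      have : 0 ≤ n * Real.log N := by positivity
      nlinarith
    have h2 : Real.exp (-(Real.log N / 48)) * v = 1 := by
      rw [hv, ← Real.exp_add]; simp
    have h3 : n / 2 * Real.exp (-(Real.log N / 48)) ≤ S := le_trans (by gcongr) hS
    calc n / 2 = n / 2 * Real.exp (-(Real.log N / 48)) * v := by rw [mul_assoc, h2, mul_one]
      _ ≤ S * v := by gcongr
  have hS0 : 0 < S := by
    by_contra h
    push Not at h
    nlinarith
  have hmi : m⁻¹ ≤ 1 / 2 := by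
    rw [one_div]; gcongr
  have hmi0 : 0 < m⁻¹ := by positivity
  -- first regime
  have hA : S ^ 2 ≤ 4 * n := by
    set β := S / (2 * n) with hβ
    have hβ0 : 0 < β := by positivity
    have hβ1 : β ≤ 1 := by rw [hβ, div_le_one (by positivity)]; linarith
    have h1 := hD β
    have h2 := (abs_le.1 (Real.abs_exp_sub_one_sub_id_le (x := β)
      (by rw [abs_of_pos hβ0]; exact hβ1))).2
    have h3 : n * ((Real.exp β - 1) / m) ≤ n * ((β + β ^ 2) * m⁻¹) := by
      rw [div_eq_mul_inv]; gcongr; linarith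
    have hSb : S = 2 * n * β := by rw [hβ]; field_simp
    have h4 : β * ((1 - m⁻¹) * S) - n * β ^ 2 * m⁻¹ ≤ 1 / 2 := by nlinarith
    have h5 : β * S / 2 - n * β ^ 2 / 2 ≤ 1 / 2 := by
      have := mul_nonneg (mul_pos hβ0 hS0).le (sub_nonneg.2 hmi)
      have := mul_nonneg (mul_pos hn0 (pow_pos hβ0 2)).le (sub_nonneg.2 hmi)
      nlinarith
    have h6 : n * β ^ 2 ≤ 1 := by rw [hSb] at h5; nlinarith
    rw [hSb]
    nlinarith
  -- second regime
  have hB : S * L ≤ n + 1 / 2 := by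
    have h1 := hD L
    rw [hLdef, Real.exp_log (by linarith), ← hLdef] at h1
    have h2 : n * ((m - 1) / m) = n - n * m⁻¹ := by field_simp
    rw [h2] at h1
    have h3 : 0 ≤ L * (m⁻¹ * (n - S)) :=
      mul_nonneg (by linarith) (mul_nonneg hmi0.le (by linarith))
    have h4 := mul_pos hn0 hmi0
    nlinarith
  have hv0 : 0 < v := by linarith
  have hn16 : n ≤ 16 * v ^ 2 := by
    have h1 : (n / 2) ^ 2 ≤ (S * v) ^ 2 := by gcongr
    have h2 : (S * v) ^ 2 ≤ 4 * n * v ^ 2 := by rw [mul_pow]; gcongr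
    have h3 : n * n ≤ n * (16 * v ^ 2) := by nlinarith
    exact le_of_mul_le_mul_left h3 hn0
  have hL4 : L ≤ 4 * v := by
    have h1 : n / 2 * L ≤ S * v * L := by gcongr
    have h2 : S * v * L ≤ (n + 1 / 2) * v := by nlinarith
    have h3 : n * L ≤ n * (4 * v) := by nlinarith
    exact le_of_mul_le_mul_left h3 hn0
  have hN3 : N ≤ 64 * v ^ 3 := by
    calc N = n * L := rfl
      _ ≤ 16 * v ^ 2 * (4 * v) := by gcongr
      _ = 64 * v ^ 3 := by ring
  have hv64 : v ^ 45 ≤ 64 := by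
    rw [← hv48] at hN3
    have : v ^ 3 * v ^ 45 ≤ v ^ 3 * 64 := by nlinarith
    exact le_of_mul_le_mul_left this (by positivity)
  have hv2 : v ≤ 2 := by
    by_contra h
    push Not at h
    have : (2 : ℝ) ^ 45 ≤ v ^ 45 := by gcongr
    norm_num at this
    linarith
  have hN512 : N ≤ 512 := by
    have : v ^ 3 ≤ 2 ^ 3 := by gcongr
    linarith
  have hn64 : n ≤ 64 := by
    have : v ^ 2 ≤ 2 ^ 2 := by gcongr
    linarith
  have hlogN : Real.log N ≤ 512 := by
    have := Real.log_le_sub_one_of_pos (show 0 < N by linarith)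
    linarith
  have : n * Real.log N ≤ 64 * 512 := by gcongr
  linarith

/-- For the `m`-state lamplighter chain on the two-dimensional
torus with `n = k²` vertices, `τ_ent = Ω(n log(n log m))`: there is `c' > 0` with
`τ_ent ≥ c' n log(n log m)`. -/
theorem lamplighter_torus_entropy_lower :
    ∃ c' : ℝ, 0 < c' ∧
      ∀ (k m : ℕ) [NeZero k], 2 ≤ k → 2 ≤ m →
        c' * ((k : ℝ) ^ 2) * Real.log (((k : ℝ) ^ 2) * Real.log m) ≤
          (tauEnt (lampChain (torusWalk k) m)
            (unif ((ZMod k × ZMod k → Fin m) × (ZMod k × ZMod k)))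
            (Real.exp 1)⁻¹ : ℝ) := by
  refine ⟨1 / 10 ^ 8, by norm_num, ?_⟩
  intro k m _ hk hm
  by_contra hcon
  push Not at hcon
  have hm0 : 0 < m := by omega
  have hP := torus_stoch k
  have hs := torus_symm k
  have hd := torus_diag k
  have hcard : (Fintype.card (ZMod k × ZMod k) : ℝ) = (k : ℝ) ^ 2 := by
    rw [Fintype.card_prod, ZMod.card]; push_cast; ring
  have hk2 : (4 : ℝ) ≤ (k : ℝ) ^ 2 := by
    have : (2 : ℝ) ≤ k := by exact_mod_cast hk
    nlinarith
  have hne := ent_eventually (lamp_stoch hP m hm0) (lamp_unif hP hs m hm0)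
    (fun p => lamp_pos (l := p.1) (x := p.2) hm0 (by linarith [hd p.2]) (fun _ _ _ => rfl))
    (lamp_irred hm0 (fun x => by linarith [hd x]) (torus_irred k))
    (ε := (Real.exp 1)⁻¹) (by positivity)
  have hmem := Nat.sInf_mem (s := {n' | ∀ n ≥ n', ∀ x, relEnt ((lampChain (torusWalk k) m ^ n) x)
    (unif ((ZMod k × ZMod k → Fin m) × (ZMod k × ZMod k))) ≤ (Real.exp 1)⁻¹}) hne
  change ∀ n ≥ tauEnt (lampChain (torusWalk k) m)
    (unif ((ZMod k × ZMod k → Fin m) × (ZMod k × ZMod k))) (Real.exp 1)⁻¹, _ at hmem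
  set τ := tauEnt (lampChain (torusWalk k) m)
    (unif ((ZMod k × ZMod k → Fin m) × (ZMod k × ZMod k))) (Real.exp 1)⁻¹ with hτ
  let a0 : Fin m := ⟨0, hm0⟩
  have hτ1 : 1 ≤ τ := by
    by_contra h
    have h0 : τ = 0 := by omega
    have h1 := hmem 0 (by omega) ((fun _ => a0), (0, 0))
    refine absurd h1 (not_le.2 (relEnt_zero _ _ ?_))
    rw [Fintype.card_prod, Fintype.card_prod, ZMod.card]
    have : 0 < Fintype.card (ZMod k × ZMod k → Fin m) := Fintype.card_pos_iff.2 ⟨fun _ => a0⟩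
    nlinarith
  have hτ1' : (1 : ℝ) ≤ τ := by exact_mod_cast hτ1
  set s := 1 / 10 ^ 8 * (k : ℝ) ^ 2 * Real.log ((k : ℝ) ^ 2 * Real.log m) with hsdef
  have hs1 : 1 ≤ s := by linarith
  obtain ⟨j, hj1, hj2⟩ := exists_nat_pow_near hs1 (one_lt_two)
  obtain ⟨x, hx⟩ := exists_start hP hs hd (by rw [hcard]; exact hk2) (j + 1)
  rw [hcard] at hx
  refine final_arith ((k : ℝ) ^ 2) m (∑ z, surv (torusWalk k) z (2 ^ (j + 1)) x) (2 ^ (j + 1)) hk2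
    (by exact_mod_cast hm) hx ?_ (by rw [pow_succ]; linarith) hs1 ?_
  · rw [← hcard]
    refine (Finset.sum_le_sum fun z _ => surv_le hP z _ x).trans ?_
    simp
  · intro β
    obtain ⟨t, ht⟩ : ∃ t, 2 ^ (j + 1) = t + 1 :=
      ⟨2 ^ (j + 1) - 1, (Nat.sub_add_cancel Nat.one_le_two_pow).symm⟩
    have h1 := lamp_ent_ge hP m hm0 a0 β t x
    rw [← ht, hcard] at h1
    have hge : τ ≤ 2 ^ (j + 1) := by
      have : (τ : ℝ) ≤ ((2 ^ (j + 1) : ℕ) : ℝ) := by push_cast; linarith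
      exact_mod_cast this
    have h2 := hmem _ hge ((fun _ => a0), x)
    have h4 : (Real.exp 1)⁻¹ ≤ 1 / 2 := by
      rw [one_div]; gcongr; linarith [Real.exp_one_gt_d9]
    exact h1.trans (h2.trans h4)

end Paper
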